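/- Fix a positive integer k and let λ, μ, ν ∈ [0,k]. The set T_{λ,μ}^ν is a single orbit of the diagonal conjugation action of SU(2) on SU(2)×SU(2): if (g₁,h₁) and (g₂,h₂) both lie in T_{λ,μ}^ν, then there exists x ∈ SU(2) with g₂ = x g₁ x⁻¹ and h₂ = x h₁ x⁻¹. -/

import Mathlib

open Matrix Complex Real

noncomputable section

/-- `SU(2)`: 2×2 complex unitary matrices with determinant 1. -/
def SU2 : Set (Matrix (Fin 2) (Fin 2) ℂ) :=
  {g | g ∈ Matrix.unitaryGroup (Fin 2) ℂ ∧ g.det = 1}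

/-- The diagonal matrix `t_λ = diag(exp(iπλ/k), exp(−iπλ/k))`. -/
def tmat (k : ℕ) (l : ℝ) : Matrix (Fin 2) (Fin 2) ℂ :=
  Matrix.diagonal ![Complex.exp (Complex.I * ((Real.pi * l / k : ℝ) : ℂ)),
    Complex.exp (-(Complex.I * ((Real.pi * l / k : ℝ) : ℂ)))]

/-- The conjugacy class `C_λ` of `t_λ` in `SU(2)`. -/
def conjClass (k : ℕ) (l : ℝ) : Set (Matrix (Fin 2) (Fin 2) ℂ) :=
  {g | ∃ x ∈ SU2, g = x * tmat k l * x⁻¹}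

/-- `T_{λ,μ}^ν = {(g,h) : g ∈ C_λ, h ∈ C_μ, g·h ∈ C_ν}`. -/
def Tset (k : ℕ) (l m n : ℝ) :
    Set (Matrix (Fin 2) (Fin 2) ℂ × Matrix (Fin 2) (Fin 2) ℂ) :=
  {p | p.1 ∈ conjClass k l ∧ p.2 ∈ conjClass k m ∧ p.1 * p.2 ∈ conjClass k n}

theorem SU2.mul_mem {x y : Matrix (Fin 2) (Fin 2) ℂ} (hx : x ∈ SU2) (hy : y ∈ SU2) :
    x * y ∈ SU2 :=
  ⟨MulMemClass.mul_mem hx.1 hy.1, by rw [det_mul, hx.2, hy.2, one_mul]⟩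

theorem SU2.inv_eq_star {x : Matrix (Fin 2) (Fin 2) ℂ} (hx : x ∈ SU2) : x⁻¹ = star x :=
  Matrix.inv_eq_right_inv (Matrix.mem_unitaryGroup_iff.1 hx.1)

theorem SU2.inv_mul_cancel {x : Matrix (Fin 2) (Fin 2) ℂ} (hx : x ∈ SU2) : x⁻¹ * x = 1 :=
  Matrix.nonsing_inv_mul x (by rw [hx.2]; exact isUnit_one)

theorem SU2.mul_inv_cancel {x : Matrix (Fin 2) (Fin 2) ℂ} (hx : x ∈ SU2) : x * x⁻¹ = 1 :=
  Matrix.mul_nonsing_inv x (by rw [hx.2]; exact isUnit_one)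

theorem SU2.inv_mem {x : Matrix (Fin 2) (Fin 2) ℂ} (hx : x ∈ SU2) : x⁻¹ ∈ SU2 := by
  refine ⟨?_, ?_⟩
  · rw [SU2.inv_eq_star hx]
    exact Unitary.star_mem hx.1
  · have h := congrArg Matrix.det (SU2.mul_inv_cancel hx)
    rwa [det_mul, hx.2, one_mul, det_one] at h

theorem SU2.inv_inv {x : Matrix (Fin 2) (Fin 2) ℂ} (hx : x ∈ SU2) : x⁻¹⁻¹ = x :=
  Matrix.nonsing_inv_nonsing_inv x (by rw [hx.2]; exact isUnit_one)

theorem SU2.star_eq_adjugate {x : Matrix (Fin 2) (Fin 2) ℂ} (hx : x ∈ SU2) :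
    star x = x.adjugate := by
  rw [← SU2.inv_eq_star hx, Matrix.inv_def, hx.2, Ring.inverse_one, one_smul]

theorem SU2.apply_one_one {x : Matrix (Fin 2) (Fin 2) ℂ} (hx : x ∈ SU2) :
    x 1 1 = star (x 0 0) := by
  have h := congrFun (congrFun (SU2.star_eq_adjugate hx) 0) 0
  rw [Matrix.adjugate_fin_two] at h
  simpa [Matrix.star_apply] using h.symm

theorem SU2.apply_zero_one {x : Matrix (Fin 2) (Fin 2) ℂ} (hx : x ∈ SU2) :
    x 0 1 = -star (x 1 0) := by
  have h := congrFun (congrFun (SU2.star_eq_adjugate hx) 0) 1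
  rw [Matrix.adjugate_fin_two] at h
  simp [Matrix.star_apply] at h
  simp [h]

theorem diagonal_mem_SU2 {z : ℂ} (hz : z * star z = 1) :
    Matrix.diagonal ![z, star z] ∈ SU2 := by
  have hz' : star z * z = 1 := by rw [mul_comm, hz]
  refine ⟨?_, by simpa [Matrix.det_diagonal] using hz⟩
  rw [Matrix.mem_unitaryGroup_iff]
  ext i j
  fin_cases i <;> fin_cases j <;>
    simp_all [Matrix.mul_apply, Matrix.star_apply, Matrix.diagonal]

theorem exists_tmat_eq_diagonal (k : ℕ) (l : ℝ) :
    ∃ z : ℂ, z * star z = 1 ∧ tmat k l = Matrix.diagonal ![z, star z] := by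
  have hs : star (Complex.exp (Complex.I * ((Real.pi * l / k : ℝ) : ℂ))) =
      Complex.exp (-(Complex.I * ((Real.pi * l / k : ℝ) : ℂ))) := by
    rw [Complex.star_def, ← Complex.exp_conj, map_mul, Complex.conj_I, Complex.conj_ofReal,
      neg_mul]
  refine ⟨_, ?_, by rw [hs, tmat]⟩
  rw [hs, ← Complex.exp_add, add_neg_cancel, Complex.exp_zero]

theorem exists_unit_sq_mul_eq {b c : ℂ} (h : b * star b = c * star c) :
    ∃ w : ℂ, w * star w = 1 ∧ c = star w * star w * b := by
  rcases eq_or_ne b 0 with rfl | hb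
  · refine ⟨1, by simp, ?_⟩
    simpa using h.symm
  · obtain ⟨v, hv⟩ := IsAlgClosed.exists_pow_nat_eq (c / b) (n := 2) (by norm_num)
    have hbc : ‖c‖ = ‖b‖ := by
      rw [Complex.star_def, Complex.mul_conj', Complex.mul_conj'] at h
      have h' : ‖b‖ ^ 2 = ‖c‖ ^ 2 := by exact_mod_cast h
      exact ((pow_left_inj₀ (norm_nonneg b) (norm_nonneg c) two_ne_zero).1 h').symm
    have hn : ‖v‖ = 1 := by
      have h2 : ‖v‖ ^ 2 = 1 := by
        rw [← norm_pow, hv, norm_div, hbc, div_self (norm_ne_zero_iff.2 hb)]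
      exact (pow_eq_one_iff_of_nonneg (norm_nonneg v) two_ne_zero).1 h2
    refine ⟨star v, ?_, ?_⟩
    · rw [star_star, mul_comm, Complex.star_def, Complex.mul_conj', hn]
      norm_num
    · rw [star_star, ← sq, hv, div_mul_cancel₀ _ hb]

/-- Away from the centre, a pair with diagonal first entry is determined up to conjugation by
the torus by the traces of the second entry and of the product. -/
theorem exists_diagonal_conj {z : ℂ} (hz : z ≠ star z) {P Q : Matrix (Fin 2) (Fin 2) ℂ}
    (hP : P ∈ SU2) (hQ : Q ∈ SU2) (htr : P.trace = Q.trace)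
    (htr' : (Matrix.diagonal ![z, star z] * P).trace = (Matrix.diagonal ![z, star z] * Q).trace) :
    ∃ d ∈ SU2, d * Matrix.diagonal ![z, star z] = Matrix.diagonal ![z, star z] * d ∧
      d * P = Q * d := by
  simp only [Matrix.trace_fin_two, Matrix.diagonal_mul, Matrix.cons_val_zero,
    Matrix.cons_val_one] at htr htr'
  have h00 : P 0 0 = Q 0 0 := by
    have : (z - star z) * (P 0 0 - Q 0 0) = 0 := by linear_combination htr' - star z * htr
    rcases mul_eq_zero.1 this with h | h
    · exact absurd (sub_eq_zero.1 h) hz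
    · exact sub_eq_zero.1 h
  have h11 : P 1 1 = Q 1 1 := by linear_combination htr - h00
  have hdP := hP.2
  have hdQ := hQ.2
  rw [Matrix.det_fin_two] at hdP hdQ
  have hP01 := SU2.apply_zero_one hP
  have hQ01 := SU2.apply_zero_one hQ
  obtain ⟨w, hw, hwb⟩ := exists_unit_sq_mul_eq (b := P 1 0) (c := Q 1 0) (by
    rw [hP01, h00, h11] at hdP
    rw [hQ01] at hdQ
    linear_combination hdP - hdQ)
  have hQ01' : Q 0 1 = w * w * P 0 1 := by
    rw [hQ01, hP01, hwb]
    simp only [star_mul', star_star]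
    ring
  refine ⟨_, diagonal_mem_SU2 hw, ?_, ?_⟩
  · rw [Matrix.diagonal_mul_diagonal, Matrix.diagonal_mul_diagonal]
    simp only [mul_comm]
  · ext i j
    rw [Matrix.diagonal_mul, Matrix.mul_diagonal]
    fin_cases i <;> fin_cases j <;> simp only [Fin.zero_eta, Fin.mk_one, Fin.isValue,
      Matrix.cons_val_zero, Matrix.cons_val_one]
    · rw [h00, mul_comm]
    · rw [hQ01']
      linear_combination (-w * P 0 1) * hw
    · rw [hwb]
      linear_combination (-star w * P 1 0) * hw
    · rw [h11, mul_comm]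

theorem conjClass_subset_SU2 (k : ℕ) (l : ℝ) : conjClass k l ⊆ SU2 := by
  rintro _ ⟨x, hx, rfl⟩
  obtain ⟨z, hz, ht⟩ := exists_tmat_eq_diagonal k l
  rw [ht]
  exact SU2.mul_mem (SU2.mul_mem hx (diagonal_mem_SU2 hz)) (SU2.inv_mem hx)

theorem SU2.trace_conj {x : Matrix (Fin 2) (Fin 2) ℂ} (hx : x ∈ SU2)
    (y : Matrix (Fin 2) (Fin 2) ℂ) : (x * y * x⁻¹).trace = y.trace := by
  rw [Matrix.trace_mul_comm, ← mul_assoc, SU2.inv_mul_cancel hx, one_mul]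

theorem SU2.trace_conj_inv {x : Matrix (Fin 2) (Fin 2) ℂ} (hx : x ∈ SU2)
    (y : Matrix (Fin 2) (Fin 2) ℂ) : (x⁻¹ * y * x).trace = y.trace := by
  rw [Matrix.trace_mul_comm, ← mul_assoc, SU2.mul_inv_cancel hx, one_mul]

theorem trace_eq_of_mem_conjClass {k : ℕ} {l : ℝ} {g : Matrix (Fin 2) (Fin 2) ℂ}
    (hg : g ∈ conjClass k l) : g.trace = (tmat k l).trace := by
  obtain ⟨x, hx, rfl⟩ := hg
  exact SU2.trace_conj hx _

/-- If `d` intertwines `s` and `t`, then `b d a⁻¹` conjugates `a s a⁻¹` to `b t b⁻¹`. -/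
theorem SU2.conj_transfer {a b d s t : Matrix (Fin 2) (Fin 2) ℂ} (ha : a ∈ SU2) (hd : d ∈ SU2)
    (h : d * s = t * d) :
    b * t * b⁻¹ = b * d * a⁻¹ * (a * s * a⁻¹) * (b * d * a⁻¹)⁻¹ := by
  rw [Matrix.mul_inv_rev, Matrix.mul_inv_rev, SU2.inv_inv ha]
  calc b * t * b⁻¹ = b * (t * (d * d⁻¹)) * b⁻¹ := by rw [SU2.mul_inv_cancel hd, mul_one]
    _ = b * (d * s) * d⁻¹ * b⁻¹ := by rw [h]; simp only [mul_assoc]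
    _ = b * d * (a⁻¹ * a) * s * (a⁻¹ * a) * d⁻¹ * b⁻¹ := by
      rw [SU2.inv_mul_cancel ha]; simp only [mul_assoc, one_mul]
    _ = _ := by simp only [mul_assoc]

theorem SU2.conj_conj_inv {a : Matrix (Fin 2) (Fin 2) ℂ} (ha : a ∈ SU2)
    (y : Matrix (Fin 2) (Fin 2) ℂ) : a * (a⁻¹ * y * a) * a⁻¹ = y := by
  calc a * (a⁻¹ * y * a) * a⁻¹ = (a * a⁻¹) * y * (a * a⁻¹) := by simp only [mul_assoc]
    _ = y := by rw [SU2.mul_inv_cancel ha, one_mul, mul_one]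

theorem stmt10 (k : ℕ) (hk : 0 < k) (lam mu nu : ℝ)
    (hlam : lam ∈ Set.Icc (0:ℝ) k) (hmu : mu ∈ Set.Icc (0:ℝ) k)
    (hnu : nu ∈ Set.Icc (0:ℝ) k)
    (p q : Matrix (Fin 2) (Fin 2) ℂ × Matrix (Fin 2) (Fin 2) ℂ)
    (hp : p ∈ Tset k lam mu nu) (hq : q ∈ Tset k lam mu nu) :
    ∃ x ∈ SU2, q.1 = x * p.1 * x⁻¹ ∧ q.2 = x * p.2 * x⁻¹ := by
  obtain ⟨g, h⟩ := p
  obtain ⟨g', h'⟩ := q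
  obtain ⟨⟨a, ha, hg⟩, hh, hgh⟩ := hp
  obtain ⟨⟨b, hb, hg'⟩, hh', hgh'⟩ := hq
  dsimp only at *
  obtain ⟨z, -, ht⟩ := exists_tmat_eq_diagonal k lam
  rw [ht] at hg hg'
  by_cases hz : z = star z
  · have hc : Matrix.diagonal ![z, star z] = z • (1 : Matrix (Fin 2) (Fin 2) ℂ) := by
      rw [← hz, Matrix.smul_one_eq_diagonal]
      congr 1
      ext i
      fin_cases i <;> rfl
    have hscalar : ∀ x ∈ SU2, x * Matrix.diagonal ![z, star z] * x⁻¹ =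
        z • (1 : Matrix (Fin 2) (Fin 2) ℂ) := fun x hx => by
      rw [hc, mul_smul_comm, mul_one, smul_mul_assoc, SU2.mul_inv_cancel hx]
    obtain ⟨c, hc, rfl⟩ := hh
    obtain ⟨e, he, rfl⟩ := hh'
    have hx : e * 1 * c⁻¹ ∈ SU2 := by
      rw [mul_one]
      exact SU2.mul_mem he (SU2.inv_mem hc)
    have h1 : (1 : Matrix (Fin 2) (Fin 2) ℂ) ∈ SU2 := ⟨one_mem _, det_one⟩
    refine ⟨e * 1 * c⁻¹, hx, ?_, SU2.conj_transfer hc h1 (by rw [one_mul, mul_one])⟩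
    rw [hg, hg', hscalar a ha, hscalar b hb, mul_smul_comm, mul_one, smul_mul_assoc,
      SU2.mul_inv_cancel hx]
  · have hprod : ∀ x ∈ SU2, ∀ y, (Matrix.diagonal ![z, star z] * (x⁻¹ * y * x)).trace =
        (x * Matrix.diagonal ![z, star z] * x⁻¹ * y).trace := fun x _ y => by
      rw [← mul_assoc, Matrix.trace_mul_comm]
      simp only [mul_assoc]
    obtain ⟨d, hd, hdt, hdP⟩ := exists_diagonal_conj hz (P := a⁻¹ * h * a) (Q := b⁻¹ * h' * b)
      (SU2.mul_mem (SU2.mul_mem (SU2.inv_mem ha) (conjClass_subset_SU2 _ _ hh)) ha)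
      (SU2.mul_mem (SU2.mul_mem (SU2.inv_mem hb) (conjClass_subset_SU2 _ _ hh')) hb)
      (by rw [SU2.trace_conj_inv ha, SU2.trace_conj_inv hb, trace_eq_of_mem_conjClass hh,
        trace_eq_of_mem_conjClass hh'])
      (by rw [hprod a ha, hprod b hb, ← hg, ← hg', trace_eq_of_mem_conjClass hgh,
        trace_eq_of_mem_conjClass hgh'])
    refine ⟨b * d * a⁻¹, SU2.mul_mem (SU2.mul_mem hb hd) (SU2.inv_mem ha), ?_, ?_⟩
    · rw [hg, hg']
      exact SU2.conj_transfer ha hd hdt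
    · have := SU2.conj_transfer (b := b) ha hd hdP
      rwa [SU2.conj_conj_inv ha, SU2.conj_conj_inv hb] at this
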